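/- Let n ≥ 6 be an even integer, let k be an integer with 4 ≤ k ≤ n−2, and let σ = (a b; 2^k d) ∈ SL₂(ℤ). Then x_n has neither a zero nor a pole at the cusp a/2^k while y_n vanishes there: there exist nonzero complex numbers ε₁ and ε₂ such that x_n(στ) → ε₁ and y_n(στ)·exp(−2πi·τ) → ε₂ as Im τ → ∞, where στ = (aτ+b)/(2^kτ+d). -/

import Mathlib

open Complex Filter Topology

/-- Jacobi theta function θ₂(τ) = ∑_{n∈ℤ} exp(πiτ(n+1/2)²). -/
noncomputable def θ₂ (τ : ℂ) : ℂ :=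
  ∑' n : ℤ, Complex.exp (Real.pi * Complex.I * τ * ((n : ℂ) + 1/2)^2)

/-- Jacobi theta function θ₃(τ) = ∑_{n∈ℤ} exp(πiτn²). -/
noncomputable def θ₃ (τ : ℂ) : ℂ :=
  ∑' n : ℤ, Complex.exp (Real.pi * Complex.I * τ * (n : ℂ)^2)

/-- x_n(τ) = 2θ₃(2^{n-1}τ)/θ₂(2^{n-1}τ). -/
noncomputable def xfun (n : ℕ) (τ : ℂ) : ℂ :=
  2 * θ₃ (2^(n-1) * τ) / θ₂ (2^(n-1) * τ)

/-- y_n(τ) = θ₂(8τ)/θ₂(2^{n-1}τ). -/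
noncomputable def yfun (n : ℕ) (τ : ℂ) : ℂ :=
  θ₂ (8 * τ) / θ₂ (2^(n-1) * τ)

/-!
Put `w = 2^k τ + d` and `t = w / 2^(n-1-k)`. Then `2^(n-1) στ = 2^(n-1-k) a - 1/t`, so Jacobi's
imaginary transformation turns `θ₃` and `θ₂` there into `√(-it) θ₃(t)` and `ζ √(-it) θ₄(t)` with `ζ`
a root of unity, where `θ₃(t)` and `θ₄(t)` tend to `1`. This settles `x_n`. For `y_n`, the point
`8στ` is the image of `8τ` under an element of `Γ₀(2)` with denominator `w`, so `θ₂(8στ)` is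
`θ₂(8τ)` times a continuous square root of a constant multiple of `w`. As `ℍ` is connected, this
root is a constant multiple of `√(-it)`, and what remains is `θ₂(8τ) ~ 2 exp(2πiτ)` up to a
constant.
-/

section JacobiIdentities

/-- Jacobi's theta function `θ₄(τ) = ∑ (-1)ⁿ exp(πiτn²)`, as a value of Mathlib's two-variable
theta function; it is the image of `θ₂` under `τ ↦ -1/τ`. -/
noncomputable def θ₄ (τ : ℂ) : ℂ :=
  jacobiTheta₂ (1 / 2) τ

/-- The principal branch of `√(-iz)`, holomorphic on the upper half-plane: the factor in Jacobi's
imaginary transformation. -/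
noncomputable def sqrtNegI (z : ℂ) : ℂ :=
  (-I * z) ^ (1 / 2 : ℂ)

lemma θ₃_eq_jacobiTheta₂ (τ : ℂ) : θ₃ τ = jacobiTheta₂ 0 τ :=
  tsum_congr fun n ↦ congrArg cexp (by ring)

lemma θ₂_eq_exp_mul_jacobiTheta₂ (τ : ℂ) :
    θ₂ τ = cexp (Real.pi * I * τ / 4) * jacobiTheta₂ (τ / 2) τ := by
  rw [θ₂, jacobiTheta₂, ← tsum_mul_left]
  refine tsum_congr fun n ↦ ?_
  rw [jacobiTheta₂_term, ← Complex.exp_add]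
  congr 1
  ring

lemma θ₂_add_intCast (τ : ℂ) (l : ℤ) :
    θ₂ (τ + l) = cexp (Real.pi * I * l / 4) * θ₂ τ := by
  rw [θ₂, θ₂, ← tsum_mul_left]
  refine tsum_congr fun n ↦ ?_
  obtain ⟨r, hr⟩ := Int.even_mul_succ_self n
  have hr' : (n : ℂ) * (n + 1) = r + r := mod_cast hr
  rw [← Complex.exp_add, Complex.exp_eq_exp_iff_exists_int]
  refine ⟨l * r, ?_⟩
  push_cast
  linear_combination Real.pi * I * l * hr'

lemma θ₃_add_one (τ : ℂ) : θ₃ (τ + 1) = θ₄ τ := by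
  refine tsum_congr fun n ↦ ?_
  obtain ⟨r, hr⟩ := Int.even_mul_pred_self n
  have hr' : (n : ℂ) * (n - 1) = r + r := mod_cast hr
  rw [jacobiTheta₂_term, Complex.exp_eq_exp_iff_exists_int]
  exact ⟨r, by linear_combination Real.pi * I * hr'⟩

lemma θ₃_add_intCast_of_even (τ : ℂ) {l : ℤ} (hl : Even l) : θ₃ (τ + l) = θ₃ τ := by
  obtain ⟨r, rfl⟩ := hl
  refine tsum_congr fun n ↦ ?_
  rw [Complex.exp_eq_exp_iff_exists_int]
  refine ⟨r * n ^ 2, ?_⟩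
  push_cast
  ring

lemma θ₄_add_one (τ : ℂ) : θ₄ (τ + 1) = θ₃ τ := by
  rw [← θ₃_add_one, add_assoc]
  exact_mod_cast θ₃_add_intCast_of_even τ (l := 1 + 1) (by decide)

lemma sqrtNegI_sq (z : ℂ) : sqrtNegI z ^ 2 = -I * z := by
  simp [sqrtNegI]

lemma sqrtNegI_ne_zero {z : ℂ} (hz : z ≠ 0) : sqrtNegI z ≠ 0 := by
  rw [← pow_ne_zero_iff two_ne_zero, sqrtNegI_sq]
  exact mul_ne_zero (neg_ne_zero.mpr I_ne_zero) hz

lemma jacobiTheta₂_div_neg_one_div (z : ℂ) {τ : ℂ} (hτ : τ ≠ 0) :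
    jacobiTheta₂ (z / τ) (-1 / τ) =
      sqrtNegI τ * cexp (Real.pi * I * z ^ 2 / τ) * jacobiTheta₂ z τ := by
  have hexp : -Real.pi * I * z ^ 2 / τ = -(Real.pi * I * z ^ 2 / τ) := by ring
  have hsqrt := sqrtNegI_ne_zero hτ
  rw [jacobiTheta₂_functional_equation z τ, ← sqrtNegI, hexp, Complex.exp_neg]
  field_simp

lemma θ₃_neg_one_div {τ : ℂ} (hτ : τ ≠ 0) : θ₃ (-1 / τ) = sqrtNegI τ * θ₃ τ := by
  simpa [θ₃_eq_jacobiTheta₂] using jacobiTheta₂_div_neg_one_div 0 hτ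

lemma θ₄_neg_one_div {τ : ℂ} (hτ : τ ≠ 0) : θ₄ (-1 / τ) = sqrtNegI τ * θ₂ τ := by
  have harg : τ / 2 / τ = 1 / 2 := by field_simp
  have hexp : Real.pi * I * (τ / 2) ^ 2 / τ = Real.pi * I * τ / 4 := by field_simp; ring
  rw [θ₄, θ₂_eq_exp_mul_jacobiTheta₂, ← harg, jacobiTheta₂_div_neg_one_div _ hτ, hexp, mul_assoc]

lemma θ₂_neg_one_div {τ : ℂ} (hτ : τ ≠ 0) : θ₂ (-1 / τ) = sqrtNegI τ * θ₄ τ := by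
  have harg : -1 / τ / 2 = -(1 / 2 / τ) := by ring
  have hexp : cexp (Real.pi * I * (-1 / τ) / 4) * cexp (Real.pi * I * (1 / 2) ^ 2 / τ) = 1 := by
    rw [← Complex.exp_add, Complex.exp_eq_one_iff]
    exact ⟨0, by push_cast; ring⟩
  rw [θ₂_eq_exp_mul_jacobiTheta₂, harg, jacobiTheta₂_neg_left, jacobiTheta₂_div_neg_one_div _ hτ,
    θ₄]
  linear_combination sqrtNegI τ * jacobiTheta₂ (1 / 2) τ * hexp

end JacobiIdentities

section Asymptotics

lemma tendsto_tsum_exp_pi_mul_I {ι : Type*} {c : ι → ℝ} (hc : ∀ i, 0 ≤ c i)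
    (hsum : Summable fun i ↦ Real.exp (-Real.pi * c i)) :
    Tendsto (fun τ : ℂ ↦ ∑' i, cexp (Real.pi * I * τ * c i)) (comap Complex.im atTop)
      (𝓝 (∑' i, if c i = 0 then 1 else 0)) := by
  have norm_term (i : ι) (τ : ℂ) :
      ‖cexp (Real.pi * I * τ * c i)‖ = Real.exp (-Real.pi * c i * τ.im) := by
    rw [Complex.norm_exp]
    simp [mul_right_comm]
  refine tendsto_tsum_of_dominated_convergence hsum (fun i ↦ ?_) ?_
  · split_ifs with hi
    · simp [hi, tendsto_const_nhds]
    · rw [tendsto_zero_iff_norm_tendsto_zero]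
      simp only [norm_term]
      have hneg : -Real.pi * c i < 0 :=
        mul_neg_of_neg_of_pos (neg_neg_of_pos Real.pi_pos) ((hc i).lt_of_ne' hi)
      exact Real.tendsto_exp_atBot.comp (tendsto_comap.const_mul_atTop_of_neg hneg)
  · filter_upwards [tendsto_comap.eventually (eventually_ge_atTop 1)] with τ hτ i
    rw [norm_term, Real.exp_le_exp]
    nlinarith [mul_nonneg Real.pi_pos.le (hc i)]

lemma summable_exp_neg_pi_mul_sq_add_mul (b : ℝ) :
    Summable fun n : ℤ ↦ Real.exp (-Real.pi * (n ^ 2 + b * n)) := by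
  have hsum := ((summable_jacobiTheta₂_term_iff (b / 2 * I) I).mpr (by simp)).norm
  refine hsum.congr fun n ↦ ?_
  have him : (b / 2 * I).im = b / 2 := by simp
  rw [norm_jacobiTheta₂_term, him, I_im]
  ring_nf

lemma tendsto_θ₃_comap_im_atTop : Tendsto θ₃ (comap Complex.im atTop) (𝓝 1) := by
  have hlim := tendsto_tsum_exp_pi_mul_I (c := fun n : ℤ ↦ (n : ℝ) ^ 2) (fun n ↦ sq_nonneg _)
    (by simpa using summable_exp_neg_pi_mul_sq_add_mul 0)
  unfold θ₃
  simpa using hlim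

lemma θ₂_mul_exp_neg (τ : ℂ) :
    θ₂ τ * cexp (-(Real.pi * I * τ / 4)) =
      ∑' n : ℤ, cexp (Real.pi * I * τ * ((n ^ 2 + 1 * n : ℝ) : ℂ)) := by
  rw [θ₂, ← tsum_mul_right]
  refine tsum_congr fun n ↦ ?_
  rw [← Complex.exp_add]
  congr 1
  push_cast
  ring

lemma tendsto_θ₂_mul_exp_comap_im_atTop :
    Tendsto (fun τ ↦ θ₂ τ * cexp (-(Real.pi * I * τ / 4))) (comap Complex.im atTop) (𝓝 2) := by
  have exponent_nonneg (n : ℤ) : (0 : ℝ) ≤ n ^ 2 + 1 * n := by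
    have : 0 ≤ n ^ 2 + 1 * n := by rcases le_or_gt 0 n with hn | hn <;> nlinarith
    exact_mod_cast this
  have exponent_eq_zero_iff (n : ℤ) :
      (n : ℝ) ^ 2 + 1 * n = 0 ↔ n ∈ ({0, -1} : Finset ℤ) := by
    have hfactor : (n : ℝ) ^ 2 + 1 * n = ((n * (n + 1) : ℤ) : ℝ) := by push_cast; ring
    rw [hfactor, Int.cast_eq_zero, mul_eq_zero, Finset.mem_insert, Finset.mem_singleton,
      eq_neg_iff_add_eq_zero]
  have count : ∑' n : ℤ, (if n ∈ ({0, -1} : Finset ℤ) then 1 else 0 : ℂ) = 2 := by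
    rw [tsum_eq_sum fun n hn ↦ if_neg hn, Finset.sum_ite_mem, Finset.inter_self]
    simp
  have hlim := tendsto_tsum_exp_pi_mul_I exponent_nonneg (summable_exp_neg_pi_mul_sq_add_mul 1)
  simp only [exponent_eq_zero_iff, count] at hlim
  exact hlim.congr fun τ ↦ (θ₂_mul_exp_neg τ).symm

lemma tendsto_mul_add_comap_im_atTop {r : ℝ} (hr : 0 < r) (s : ℝ) :
    Tendsto (fun τ : ℂ ↦ r * τ + s) (comap Complex.im atTop) (comap Complex.im atTop) := by
  rw [tendsto_comap_iff]
  exact (tendsto_comap.const_mul_atTop hr).congr fun τ ↦ by simp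

lemma tendsto_θ₄_comap_im_atTop : Tendsto θ₄ (comap Complex.im atTop) (𝓝 1) := by
  have hshift := tendsto_mul_add_comap_im_atTop one_pos 1
  refine (tendsto_θ₃_comap_im_atTop.comp hshift).congr fun τ ↦ ?_
  simp [θ₃_add_one]

end Asymptotics

section ModularTransformation

open UpperHalfPlane (denom denom_ne_zero)
open ModularGroup Matrix
open scoped UpperHalfPlane MatrixGroups

/-- `J` is a continuous branch on `ℍ` of the square root of a nonzero constant multiple of the
automorphy factor `cτ + d` of `g`. Leaving the constant free makes the notion stable under
composition without any bookkeeping of the eighth roots of unity in the theta multipliers. -/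
def IsHalfWeightFactor (g : SL(2, ℤ)) (J : ℍ → ℂ) : Prop :=
  Continuous J ∧ ∃ u : ℂ, u ≠ 0 ∧ ∀ τ : ℍ, J τ ^ 2 = u * denom g τ

/-- `f` is carried to `h` by `g` in weight `1/2`, up to a constant: `f (gτ) = J(τ) h(τ)` with
`J² = u (cτ + d)`. -/
def TransformsInHalfWeight (g : SL(2, ℤ)) (f h : ℍ → ℂ) : Prop :=
  ∃ J : ℍ → ℂ, IsHalfWeightFactor g J ∧ ∀ τ : ℍ, f (g • τ) = J τ * h τ

variable {g g' : SL(2, ℤ)} {J J' : ℍ → ℂ} {f h l : ℍ → ℂ}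

lemma denom_mul_eq_denom_smul_mul (g g' : SL(2, ℤ)) (τ : ℍ) :
    denom (g * g' : SL(2, ℤ)) τ = denom g (g' • τ : ℍ) * denom g' τ := by
  simpa [UpperHalfPlane.σ] using UpperHalfPlane.denom_cocycle_σ g g' τ

lemma continuous_specialLinearGroup_smul (g : SL(2, ℤ)) : Continuous fun τ : ℍ ↦ g • τ :=
  continuous_const_smul (g : GL (Fin 2) ℝ)

namespace IsHalfWeightFactor

lemma ne_zero (hJ : IsHalfWeightFactor g J) (τ : ℍ) : J τ ≠ 0 := by
  obtain ⟨-, u, hu, hsq⟩ := hJ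
  rw [← pow_ne_zero_iff two_ne_zero, hsq]
  exact mul_ne_zero hu (denom_ne_zero _ _)

lemma mul (hJ : IsHalfWeightFactor g J) (hJ' : IsHalfWeightFactor g' J') :
    IsHalfWeightFactor (g * g') fun τ ↦ J (g' • τ) * J' τ := by
  obtain ⟨hcont, u, hu, hsq⟩ := hJ
  obtain ⟨hcont', u', hu', hsq'⟩ := hJ'
  have hcomp := (hcont.comp (continuous_specialLinearGroup_smul g')).mul hcont'
  refine ⟨hcomp, u * u', mul_ne_zero hu hu', fun τ ↦ ?_⟩
  rw [mul_pow, hsq, hsq', denom_mul_eq_denom_smul_mul]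
  ring

lemma inv (hJ : IsHalfWeightFactor g J) : IsHalfWeightFactor g⁻¹ fun τ ↦ (J (g⁻¹ • τ))⁻¹ := by
  have hne := hJ.ne_zero
  obtain ⟨hcont, u, hu, hsq⟩ := hJ
  have hcomp := (hcont.comp (continuous_specialLinearGroup_smul g⁻¹)).inv₀ fun _ ↦ hne _
  refine ⟨hcomp, u⁻¹, inv_ne_zero hu, fun τ ↦ ?_⟩
  have hdenom : denom g (g⁻¹ • τ : ℍ) * denom (g⁻¹ : SL(2, ℤ)) τ = 1 := by
    rw [← denom_mul_eq_denom_smul_mul, mul_inv_cancel]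
    simp
  rw [inv_pow, hsq, mul_inv, ← eq_inv_of_mul_eq_one_right hdenom]

-- The ratio of two factors has constant square, hence is constant because `ℍ` is connected.
lemma exists_eq_const_mul (hJ : IsHalfWeightFactor g J) (hJ' : IsHalfWeightFactor g J') :
    ∃ ε : ℂ, ε ≠ 0 ∧ ∀ τ, J τ = ε * J' τ := by
  have hne' := hJ'.ne_zero
  obtain ⟨hcont, u, hu, hsq⟩ := hJ
  obtain ⟨hcont', u', hu', hsq'⟩ := hJ'
  obtain ⟨c, hc⟩ := IsAlgClosed.exists_pow_nat_eq (u / u') two_pos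
  have hc0 : c ≠ 0 := by
    rw [← pow_ne_zero_iff two_ne_zero, hc]
    exact div_ne_zero hu hu'
  have hsq_eq : Set.EqOn (J ^ 2) ((fun τ ↦ c * J' τ) ^ 2) Set.univ := fun τ _ ↦ by
    simp only [Pi.pow_apply, mul_pow, hsq, hsq', hc]
    field_simp
  rcases isPreconnected_univ.eq_or_eq_neg_of_sq_eq hcont.continuousOn
    (hcont'.const_mul c).continuousOn hsq_eq fun _ ↦ mul_ne_zero hc0 (hne' _) with heq | heq
  · exact ⟨c, hc0, fun τ ↦ heq (Set.mem_univ τ)⟩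
  · exact ⟨-c, neg_ne_zero.mpr hc0, fun τ ↦ by simpa using heq (Set.mem_univ τ)⟩

end IsHalfWeightFactor

lemma isHalfWeightFactor_sqrtNegI_denom_div {r : ℝ} (hr : 0 < r) (hg : 0 < g 1 0) :
    IsHalfWeightFactor g fun τ ↦ sqrtNegI (denom g τ / r) := by
  refine ⟨?_, -I / r, by simp [hr.ne'], fun τ ↦ by rw [sqrtNegI_sq]; ring⟩
  simp only [sqrtNegI, denom_apply]
  refine Continuous.cpow (by fun_prop) continuous_const fun τ ↦ Or.inl ?_
  have hre : (-I * (((g 1 0 : ℤ) * τ + (g 1 1 : ℤ)) / r)).re = (g 1 0 : ℝ) * τ.im / r := by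
    simp
  rw [hre]
  have := τ.im_pos
  positivity

namespace TransformsInHalfWeight

lemma mul (hfh : TransformsInHalfWeight g f h) (hhl : TransformsInHalfWeight g' h l) :
    TransformsInHalfWeight (g * g') f l := by
  obtain ⟨J, hJ, hf⟩ := hfh
  obtain ⟨J', hJ', hh⟩ := hhl
  refine ⟨_, hJ.mul hJ', fun τ ↦ ?_⟩
  rw [SemigroupAction.mul_smul, hf, hh, mul_assoc]

lemma inv (hfh : TransformsInHalfWeight g f h) : TransformsInHalfWeight g⁻¹ h f := by
  obtain ⟨J, hJ, hf⟩ := hfh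
  refine ⟨_, hJ.inv, fun τ ↦ ?_⟩
  rw [eq_inv_mul_iff_mul_eq₀ (hJ.ne_zero _), ← hf, smul_inv_smul]

lemma one (f : ℍ → ℂ) : TransformsInHalfWeight 1 f f :=
  ⟨fun _ ↦ 1, ⟨continuous_const, 1, one_ne_zero, fun τ ↦ by simp⟩, fun τ ↦ by simp⟩

lemma of_T_smul {c : ℂ} (hc : c ≠ 0) (hf : ∀ τ : ℍ, f (T • τ) = c * h τ) :
    TransformsInHalfWeight T f h :=
  have hfactor : IsHalfWeightFactor T fun _ ↦ c :=
    ⟨continuous_const, c ^ 2, pow_ne_zero 2 hc, fun τ ↦ by rw [denom_apply]; simp [coe_T]⟩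
  ⟨_, hfactor, hf⟩

lemma of_S_smul (hf : ∀ τ : ℍ, f (S • τ) = sqrtNegI τ * h τ) : TransformsInHalfWeight S f h := by
  have hfactor : IsHalfWeightFactor S fun τ ↦ sqrtNegI τ := by
    simpa [denom_S] using isHalfWeightFactor_sqrtNegI_denom_div (g := S) one_pos (by simp [S])
  exact ⟨_, hfactor, hf⟩

end TransformsInHalfWeight

/-- The theta constants indexed by the row vectors over `ℤ/2`, so that `SL₂(ℤ)` permutes them by
right multiplication of the index. A vector `v` has characteristic `v + (1, 1)`; the value `0` at
`v = 0` is the odd theta constant `θ₁(0)`. -/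
noncomputable def thetaConstant (v : Fin 2 → ZMod 2) (τ : ℍ) : ℂ :=
  if v 0 = 0 then (if v 1 = 0 then 0 else θ₂ τ) else (if v 1 = 0 then θ₄ τ else θ₃ τ)

/-- The right action of `SL₂(ℤ)` on the indices of the theta constants. -/
def thetaIndexMul (v : Fin 2 → ZMod 2) (g : SL(2, ℤ)) : Fin 2 → ZMod 2 :=
  v ᵥ* (SpecialLinearGroup.map (Int.castRingHom (ZMod 2)) g).1

lemma thetaIndexMul_eq (v : Fin 2 → ZMod 2) (g : SL(2, ℤ)) :
    thetaIndexMul v g =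
      ![v 0 * (g 0 0 : ℤ) + v 1 * (g 1 0 : ℤ), v 0 * (g 0 1 : ℤ) + v 1 * (g 1 1 : ℤ)] := by
  ext i
  fin_cases i <;> simp [thetaIndexMul, vecMul, dotProduct]

lemma thetaIndexMul_one (v : Fin 2 → ZMod 2) : thetaIndexMul v 1 = v := by
  simp [thetaIndexMul]

lemma thetaIndexMul_mul (v : Fin 2 → ZMod 2) (g g' : SL(2, ℤ)) :
    thetaIndexMul v (g * g') = thetaIndexMul (thetaIndexMul v g) g' := by
  simp [thetaIndexMul, vecMul_vecMul]

lemma coe_T_smul (τ : ℍ) : ((T • τ : ℍ) : ℂ) = τ + 1 := by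
  simpa using coe_T_zpow_smul_eq (z := τ) (n := 1)

lemma coe_S_smul (τ : ℍ) : ((S • τ : ℍ) : ℂ) = -1 / τ := by
  rw [UpperHalfPlane.modular_S_smul, UpperHalfPlane.coe_mk, inv_neg, neg_div, one_div]

lemma zmod_two_vec_cases (v : Fin 2 → ZMod 2) :
    v = ![0, 0] ∨ v = ![0, 1] ∨ v = ![1, 0] ∨ v = ![1, 1] := by
  revert v
  decide

lemma thetaConstant_transforms_T (v : Fin 2 → ZMod 2) :
    TransformsInHalfWeight T (thetaConstant v) (thetaConstant (thetaIndexMul v T)) := by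
  have hexp := Complex.exp_ne_zero (Real.pi * I / 4)
  have θ₂_add_one (τ : ℂ) : θ₂ (τ + 1) = cexp (Real.pi * I / 4) * θ₂ τ := by
    simpa using θ₂_add_intCast τ 1
  rw [thetaIndexMul_eq]
  rcases zmod_two_vec_cases v with rfl | rfl | rfl | rfl
  · exact .of_T_smul one_ne_zero fun τ ↦ by simp [thetaConstant]
  · exact .of_T_smul hexp fun τ ↦ by
      rw [thetaConstant, coe_T_smul, θ₂_add_one]; simp [thetaConstant, coe_T]
  · exact .of_T_smul one_ne_zero fun τ ↦ by
      rw [thetaConstant, coe_T_smul, θ₄_add_one]; simp [thetaConstant, coe_T]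
  · exact .of_T_smul one_ne_zero fun τ ↦ by
      rw [thetaConstant, coe_T_smul, θ₃_add_one]
      simp [thetaConstant, coe_T, CharTwo.add_self_eq_zero]

lemma thetaConstant_transforms_S (v : Fin 2 → ZMod 2) :
    TransformsInHalfWeight S (thetaConstant v) (thetaConstant (thetaIndexMul v S)) := by
  refine .of_S_smul fun τ ↦ ?_
  rw [thetaIndexMul_eq, thetaConstant, coe_S_smul, θ₂_neg_one_div τ.ne_zero,
    θ₃_neg_one_div τ.ne_zero, θ₄_neg_one_div τ.ne_zero]
  rcases zmod_two_vec_cases v with rfl | rfl | rfl | rfl <;> simp [thetaConstant, coe_S]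

theorem thetaConstant_transforms (g : SL(2, ℤ)) (v : Fin 2 → ZMod 2) :
    TransformsInHalfWeight g (thetaConstant v) (thetaConstant (thetaIndexMul v g)) := by
  have hg : g ∈ Subgroup.closure {S, T} := by simp [SpecialLinearGroup.SL2Z_generators]
  induction hg using Subgroup.closure_induction generalizing v with
  | mem x hx =>
    rcases hx with rfl | rfl
    · exact thetaConstant_transforms_S v
    · exact thetaConstant_transforms_T v
  | one => simpa only [thetaIndexMul_one] using TransformsInHalfWeight.one (thetaConstant v)
  | mul x y _ _ hx hy => simpa only [thetaIndexMul_mul] using (hx v).mul (hy (thetaIndexMul v x))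
  | inv x _ hx =>
    have hindex : thetaIndexMul (thetaIndexMul v x⁻¹) x = v := by
      rw [← thetaIndexMul_mul, inv_mul_cancel, thetaIndexMul_one]
    simpa only [hindex] using (hx (thetaIndexMul v x⁻¹)).inv

theorem θ₂_transforms_of_mem_Gamma0_two (hg : g ∈ CongruenceSubgroup.Gamma0 2) :
    TransformsInHalfWeight g (fun τ ↦ θ₂ τ) (fun τ ↦ θ₂ τ) := by
  have hlower : ((g 1 0 : ℤ) : ZMod 2) = 0 := CongruenceSubgroup.Gamma0_mem.mp hg
  have hdiag : ((g 1 1 : ℤ) : ZMod 2) ≠ 0 := by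
    intro hzero
    have hdet := g.det_coe
    rw [det_fin_two] at hdet
    simpa [hlower, hzero] using congrArg (Int.cast : ℤ → ZMod 2) hdet
  have hindex : thetaIndexMul ![0, 1] g = ![0, ((g 1 1 : ℤ) : ZMod 2)] := by
    simp [thetaIndexMul_eq, hlower]
  have hθ₂ {q : ZMod 2} (hq : q ≠ 0) : thetaConstant ![0, q] = fun τ : ℍ ↦ θ₂ τ := by
    ext τ
    simp [thetaConstant, hq]
  have htransforms := thetaConstant_transforms g ![0, 1]
  rwa [hindex, hθ₂ one_ne_zero, hθ₂ hdiag] at htransforms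

theorem exists_θ₂_smul_eq_const_mul_sqrtNegI (hg : g ∈ CongruenceSubgroup.Gamma0 2)
    (hpos : 0 < g 1 0) {r : ℝ} (hr : 0 < r) :
    ∃ ε : ℂ, ε ≠ 0 ∧ ∀ τ : ℍ, θ₂ (g • τ : ℍ) = ε * sqrtNegI (denom g τ / r) * θ₂ τ := by
  obtain ⟨J, hJ, hθ₂⟩ := θ₂_transforms_of_mem_Gamma0_two hg
  obtain ⟨ε, hε, hJε⟩ := hJ.exists_eq_const_mul (isHalfWeightFactor_sqrtNegI_denom_div hr hpos)
  exact ⟨ε, hε, fun τ ↦ by rw [← hJε τ]; exact hθ₂ τ⟩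

end ModularTransformation

section ThetaQuotientsAtCusps

open ModularGroup Matrix
open scoped UpperHalfPlane MatrixGroups

lemma mul_moebius_eq_neg_one_div_add {K : Type*} [Field K] {a b c d m τ : K} (hm : m ≠ 0)
    (hdenom : c * τ + d ≠ 0) (hdet : a * d - c * b = 1) :
    m * c * ((a * τ + b) / (c * τ + d)) = -1 / ((c * τ + d) / m) + m * a := by
  field_simp
  linear_combination -hdet

lemma mul_add_intCast_ne_zero {c : ℤ} (hc : 0 < c) (d : ℤ) {τ : ℂ} (hτ : 0 < τ.im) :
    (c : ℂ) * τ + d ≠ 0 := by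
  intro hzero
  have him : (c : ℝ) * τ.im = 0 := by simpa using congrArg Complex.im hzero
  have : (0 : ℝ) < c := mod_cast hc
  exact (mul_pos this hτ).ne' him

variable {a b c d m : ℤ}

lemma θ₂_mul_moebius (hc : 0 < c) (hm : 0 < m) (hdet : a * d - c * b = 1) {τ : ℂ}
    (hτ : 0 < τ.im) :
    θ₂ (m * c * ((a * τ + b) / (c * τ + d))) =
      cexp (Real.pi * I * (m * a) / 4) * (sqrtNegI ((c * τ + d) / m) * θ₄ ((c * τ + d) / m)) := by
  have hdenom := mul_add_intCast_ne_zero hc d hτ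
  have hm' : (m : ℂ) ≠ 0 := mod_cast hm.ne'
  rw [mul_moebius_eq_neg_one_div_add hm' hdenom (mod_cast hdet),
    ← θ₂_neg_one_div (div_ne_zero hdenom hm')]
  exact_mod_cast θ₂_add_intCast _ (m * a)

lemma θ₃_mul_moebius (hc : 0 < c) (hm : 0 < m) (hm2 : Even m) (hdet : a * d - c * b = 1) {τ : ℂ}
    (hτ : 0 < τ.im) :
    θ₃ (m * c * ((a * τ + b) / (c * τ + d))) =
      sqrtNegI ((c * τ + d) / m) * θ₃ ((c * τ + d) / m) := by
  have hdenom := mul_add_intCast_ne_zero hc d hτ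
  have hm' : (m : ℂ) ≠ 0 := mod_cast hm.ne'
  rw [mul_moebius_eq_neg_one_div_add hm' hdenom (mod_cast hdet),
    ← θ₃_neg_one_div (div_ne_zero hdenom hm')]
  exact_mod_cast θ₃_add_intCast_of_even _ (hm2.mul_right a)

lemma tendsto_mul_add_div_comap_im_atTop (hc : 0 < c) (hm : 0 < m) (d : ℤ) :
    Tendsto (fun τ : ℂ ↦ (c * τ + d) / m) (comap Complex.im atTop) (comap Complex.im atTop) := by
  have hratio : (0 : ℝ) < c / m := by positivity
  refine (tendsto_mul_add_comap_im_atTop hratio (d / m)).congr fun τ ↦ ?_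
  push_cast
  ring

lemma eventually_im_pos_comap_im_atTop : ∀ᶠ τ : ℂ in comap Complex.im atTop, 0 < τ.im :=
  tendsto_comap.eventually (eventually_gt_atTop 0)

theorem tendsto_θ₃_div_θ₂_mul_moebius (hc : 0 < c) (hm : 0 < m) (hm2 : Even m)
    (hdet : a * d - c * b = 1) :
    Tendsto (fun τ : ℂ ↦ θ₃ (m * c * ((a * τ + b) / (c * τ + d))) /
        θ₂ (m * c * ((a * τ + b) / (c * τ + d))))
      (comap Complex.im atTop) (𝓝 (cexp (Real.pi * I * (m * a) / 4))⁻¹) := by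
  have htend := tendsto_mul_add_div_comap_im_atTop hc hm d
  have hlim := ((tendsto_θ₃_comap_im_atTop.comp htend).div
    (tendsto_θ₄_comap_im_atTop.comp htend) one_ne_zero).const_mul
      (cexp (Real.pi * I * (m * a) / 4))⁻¹
  rw [div_one, mul_one] at hlim
  refine hlim.congr' ?_
  filter_upwards [eventually_im_pos_comap_im_atTop] with τ hτ
  have hsqrt : sqrtNegI ((c * τ + d) / m) ≠ 0 :=
    sqrtNegI_ne_zero (div_ne_zero (mul_add_intCast_ne_zero hc d hτ) (mod_cast hm.ne'))
  rw [θ₂_mul_moebius hc hm hdet hτ, θ₃_mul_moebius hc hm hm2 hdet hτ]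
  simp only [Pi.div_apply, Function.comp_apply]
  generalize ((c * τ + d) / m : ℂ) = t at hsqrt ⊢
  field_simp

lemma exists_θ₂_mul_moebius_eq {e : ℤ} (hc : 0 < c) (hc2 : Even c) (he : 0 < e) (hm : 0 < m)
    (hdet : a * d - (e * c : ℤ) * b = 1) :
    ∃ ε : ℂ, ε ≠ 0 ∧ ∀ τ : ℂ, 0 < τ.im →
      θ₂ (e * ((a * τ + b) / ((e * c : ℤ) * τ + d))) =
        ε * sqrtNegI (((e * c : ℤ) * τ + d) / m) * θ₂ (e * τ) := by
  let g : SL(2, ℤ) := ⟨!![a, e * b; c, d], by rw [det_fin_two_of]; linear_combination hdet⟩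
  have hg : g ∈ CongruenceSubgroup.Gamma0 2 :=
    CongruenceSubgroup.Gamma0_mem.mpr ((ZMod.intCast_zmod_eq_zero_iff_dvd c 2).mpr hc2.two_dvd)
  obtain ⟨ε, hε, hθ₂⟩ := exists_θ₂_smul_eq_const_mul_sqrtNegI hg hc (r := m) (mod_cast hm)
  refine ⟨ε, hε, fun τ hτ ↦ ?_⟩
  let τ' : ℍ := ⟨e * τ, by simpa using mul_pos (Int.cast_pos.mpr he) hτ⟩
  have hsmul : ((g • τ' : ℍ) : ℂ) = e * ((a * τ + b) / ((e * c : ℤ) * τ + d)) := by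
    rw [UpperHalfPlane.coe_specialLinearGroup_apply, mul_div_assoc']
    simp [g, τ', mul_add, mul_left_comm, mul_assoc]
  have hdenom : UpperHalfPlane.denom g τ' = (e * c : ℤ) * τ + d := by
    rw [denom_apply]
    simp [g, τ', mul_left_comm, mul_assoc]
  simpa only [hsmul, hdenom, ofReal_intCast] using hθ₂ τ'

theorem exists_tendsto_θ₂_div_θ₂_mul_moebius {e : ℤ} (hc : 0 < c) (hc2 : Even c) (he : 0 < e)
    (hm : 0 < m) (hdet : a * d - (e * c : ℤ) * b = 1) :
    ∃ ε : ℂ, ε ≠ 0 ∧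
      Tendsto (fun τ : ℂ ↦ θ₂ (e * ((a * τ + b) / ((e * c : ℤ) * τ + d))) /
          θ₂ (m * (e * c : ℤ) * ((a * τ + b) / ((e * c : ℤ) * τ + d))) *
            cexp (-(Real.pi * I * (e * τ) / 4)))
        (comap Complex.im atTop) (𝓝 ε) := by
  obtain ⟨ε, hε, hθ₂⟩ := exists_θ₂_mul_moebius_eq hc hc2 he hm hdet
  have hec : 0 < e * c := mul_pos he hc
  set ζ := cexp (Real.pi * I * (m * a) / 4) with hζ
  have hscale : Tendsto (fun τ : ℂ ↦ (e : ℂ) * τ) (comap Complex.im atTop)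
      (comap Complex.im atTop) := by
    simpa using tendsto_mul_add_comap_im_atTop (Int.cast_pos.mpr he) 0
  have hnum := tendsto_θ₂_mul_exp_comap_im_atTop.comp hscale
  have hden := tendsto_θ₄_comap_im_atTop.comp (tendsto_mul_add_div_comap_im_atTop hec hm d)
  refine ⟨ε / ζ * (2 / 1), by simp [hε, hζ], ?_⟩
  refine ((hnum.div hden one_ne_zero).const_mul (ε / ζ)).congr' ?_
  filter_upwards [eventually_im_pos_comap_im_atTop] with τ hτ
  have hsqrt : sqrtNegI (((e * c : ℤ) * τ + d) / m) ≠ 0 :=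
    sqrtNegI_ne_zero (div_ne_zero (mul_add_intCast_ne_zero hec d hτ) (mod_cast hm.ne'))
  rw [hθ₂ τ hτ, θ₂_mul_moebius hec hm hdet hτ]
  simp only [Pi.div_apply, Function.comp_apply, ← hζ]
  generalize (((e * c : ℤ) * τ + d) / m : ℂ) = t at hsqrt ⊢
  field_simp

end ThetaQuotientsAtCusps

theorem behavior_at_middle_cusps_general {n k : ℕ} (hk : 4 ≤ k) (hkn : k ≤ n - 2)
    {a b d : ℤ} (hdet : a * d - 2 ^ k * b = 1) :
    ∃ ε₁ ε₂ : ℂ, ε₁ ≠ 0 ∧ ε₂ ≠ 0 ∧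
      Tendsto (fun τ : ℂ ↦
          xfun n (((a : ℂ) * τ + b) / ((2 ^ k : ℂ) * τ + d)))
        (comap Complex.im atTop) (𝓝 ε₁) ∧
      Tendsto (fun τ : ℂ ↦
          yfun n (((a : ℂ) * τ + b) / ((2 ^ k : ℂ) * τ + d)) *
            Complex.exp (-(2 * Real.pi * Complex.I * τ)))
        (comap Complex.im atTop) (𝓝 ε₂) := by
  obtain ⟨j, rfl⟩ : ∃ j, k = 3 + (j + 1) := ⟨k - 4, by omega⟩
  obtain ⟨l, rfl⟩ : ∃ l, n = (l + 1) + (3 + (j + 1)) + 1 := ⟨n - j - 6, by omega⟩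
  have hx := tendsto_θ₃_div_θ₂_mul_moebius (m := 2 ^ (l + 1)) (by positivity) (by positivity)
    (by simp [Int.even_pow]) hdet
  obtain ⟨ε, hε, hy⟩ := exists_tendsto_θ₂_div_θ₂_mul_moebius (a := a) (b := b) (d := d)
    (c := 2 ^ (j + 1)) (e := 8) (m := 2 ^ (l + 1)) (by positivity) (by simp [Int.even_pow])
    (by norm_num) (by positivity) (by rw [← hdet]; ring)
  refine ⟨_, ε, mul_ne_zero two_ne_zero (inv_ne_zero (Complex.exp_ne_zero _)), hε,
    (hx.const_mul 2).congr fun τ ↦ ?_, hy.congr fun τ ↦ ?_⟩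
  · norm_num [xfun, pow_add, mul_div_assoc]
  · have hexp : Real.pi * I * (8 * τ) / 4 = 2 * Real.pi * I * τ := by ring
    simp only [yfun]
    push_cast
    rw [hexp]
    norm_num [pow_add]

theorem behavior_at_middle_cusps (n : ℕ) (hn : 6 ≤ n) (hn2 : Even n)
    (k : ℕ) (hk : 4 ≤ k) (hk2 : k ≤ n - 2)
    (a b d : ℤ) (hdet : a * d - 2 ^ k * b = 1) :
    ∃ ε₁ ε₂ : ℂ, ε₁ ≠ 0 ∧ ε₂ ≠ 0 ∧
      Tendsto (fun τ : ℂ =>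
          xfun n (((a : ℂ) * τ + b) / ((2 ^ k : ℂ) * τ + d)))
        (comap Complex.im atTop) (𝓝 ε₁) ∧
      Tendsto (fun τ : ℂ =>
          yfun n (((a : ℂ) * τ + b) / ((2 ^ k : ℂ) * τ + d)) *
            Complex.exp (-(2 * Real.pi * Complex.I * τ)))
        (comap Complex.im atTop) (𝓝 ε₂) :=
  behavior_at_middle_cusps_general hk hk2 hdet
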